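/- The automorphism group of the graph Π_I has cardinality at most 60. -/

import Mathlib

/-- The ten faces of the hemi-icosahedron on vertex set `Fin 6`. -/
def faces : Finset (Finset (Fin 6)) :=
  {{0,1,2}, {0,2,3}, {0,3,4}, {0,4,5}, {0,5,1}, {1,2,4}, {2,3,5}, {1,3,4}, {2,4,5}, {1,3,5}}

/-- The 16-element vertex set: `Fin 6` together with the ten faces. -/
abbrev V16 := Fin 6 ⊕ {f : Finset (Fin 6) // f ∈ faces}

/-- Vertex-face incidence: `v : Fin 6` is incident to a face `f` iff `v ∈ f`. -/
def piRel : V16 → V16 → Prop := fun a b =>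
  match a, b with
  | Sum.inl v, Sum.inr f => v ∈ f.1
  | _, _ => False

instance : DecidableRel piRel := fun a b =>
  match a, b with
  | Sum.inl v, Sum.inr f => inferInstanceAs (Decidable (v ∈ f.1))
  | Sum.inl _, Sum.inl _ => Decidable.isFalse id
  | Sum.inr _, Sum.inl _ => Decidable.isFalse id
  | Sum.inr _, Sum.inr _ => Decidable.isFalse id

/-- `Π_I`, the projective vertex-face graph of the icosahedron (vertex-face graph of
the hemi-icosahedron): `v : Fin 6` is adjacent to `f ∈ faces` iff `v ∈ f`. -/
def piI : SimpleGraph V16 := SimpleGraph.fromRel piRel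

instance : DecidableRel piI.Adj := fun a b =>
  decidable_of_iff _ (SimpleGraph.fromRel_adj piRel a b).symm

/-!
An automorphism of a strongly connected pseudomanifold that fixes a facet pointwise is the identity:
a facet sharing a ridge with a pointwise fixed one must go to itself, its remaining vertex is
therefore fixed, and this spreads along chains of facets. By the orbit-stabilizer theorem there are
at most `n !` automorphisms per facet, `n` being the number of vertices of a facet. In `Π_I` the
points have degree `5` and the faces degree `3`, so an automorphism of `Π_I` cannot mix them and is
determined by the automorphism of the hemi-icosahedron it induces; of these there are at most
`10 * 3! = 60`.
-/

open Finset Function MulAction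
open scoped Nat Pointwise

section Pseudomanifold

variable {α : Type*} [DecidableEq α] {𝓕 : Finset (Finset α)} {n : ℕ}

/-- `𝓕` is the set of facets of a pseudomanifold of dimension `n - 1`, possibly with boundary, on
the vertex set `α`: the complex is pure, every codimension-one face (ridge) lies in at most two
facets, any two facets are joined by a chain of facets in which consecutive ones share a ridge, and
every point of `α` is a vertex. -/
structure IsPseudomanifold (𝓕 : Finset (Finset α)) (n : ℕ) : Prop where
  sized : (𝓕 : Set (Finset α)).Sized n
  card_ridge_le_two (r : Finset α) : #r + 1 = n → #{f ∈ 𝓕 | r ⊆ f} ≤ 2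
  reflTransGen ⦃f⦄ (hf : f ∈ 𝓕) ⦃g⦄ (hg : g ∈ 𝓕) :
    Relation.ReflTransGen (fun a b => b ∈ 𝓕 ∧ #(a ∩ b) + 1 = n) f g
  exists_mem (v : α) : ∃ f ∈ 𝓕, v ∈ f

namespace IsPseudomanifold

variable {G : Type*} [Group G] [MulAction G α] {σ : G} {f g : Finset α}

lemma smul_eq_of_subset_inter (h𝓕 : IsPseudomanifold 𝓕 n) (hσ : σ ∈ stabilizer G 𝓕)
    (hf : f ∈ 𝓕) (hg : g ∈ 𝓕) (hfg : #(f ∩ g) + 1 = n) (hσf : σ • f = f)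
    (hsub : f ∩ g ⊆ σ • g) : σ • g = g := by
  by_contra hσg
  have hne : f ≠ g := by
    rintro rfl
    rw [inter_self, h𝓕.sized hf] at hfg
    lia
  have hne' : f ≠ σ • g := fun h => hne (smul_left_cancel σ (hσf.trans h))
  refine (h𝓕.card_ridge_le_two (f ∩ g) hfg).not_gt
    (two_lt_card.2 ⟨f, ?_, g, ?_, σ • g, ?_, hne, hne', Ne.symm hσg⟩)
  · exact mem_filter.2 ⟨hf, inter_subset_left⟩
  · exact mem_filter.2 ⟨hg, inter_subset_right⟩
  · exact mem_filter.2 ⟨mem_stabilizer_finset'.1 hσ hg, hsub⟩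

lemma mem_fixingSubgroup_of_adjacent (h𝓕 : IsPseudomanifold 𝓕 n) (hσ : σ ∈ stabilizer G 𝓕)
    (hf : f ∈ 𝓕) (hg : g ∈ 𝓕) (hfg : #(f ∩ g) + 1 = n)
    (hfix : σ ∈ fixingSubgroup G (f : Set α)) : σ ∈ fixingSubgroup G (g : Set α) := by
  rw [mem_fixingSubgroup_iff] at hfix ⊢
  have hσf : σ • f = f := mem_stabilizer_finset'.2 fun v hv => by rwa [hfix v hv]
  have hσg : σ • g = g := h𝓕.smul_eq_of_subset_inter hσ hf hg hfg hσf fun v hv => by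
    rw [← hfix v (mem_inter.1 hv).1]
    exact smul_mem_smul_finset (mem_inter.1 hv).2
  have hcard : #(g \ f) = 1 := by
    have := card_sdiff_add_card_inter g f
    rw [inter_comm, h𝓕.sized hg] at this
    lia
  obtain ⟨w, hw⟩ := card_eq_one.1 hcard
  have hσw : σ • w = w := by
    have : σ • (g \ f) = g \ f := by rw [smul_finset_sdiff, hσf, hσg]
    rwa [hw, smul_finset_singleton, singleton_inj] at this
  intro v hv
  by_cases hvf : v ∈ f
  · exact hfix v hvf
  · have hvw : v ∈ g \ f := mem_sdiff.2 ⟨hv, hvf⟩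
    rw [hw, mem_singleton] at hvw
    rw [hvw, hσw]

lemma mem_fixingSubgroup_of_mem (h𝓕 : IsPseudomanifold 𝓕 n) (hσ : σ ∈ stabilizer G 𝓕)
    (hf : f ∈ 𝓕) (hfix : σ ∈ fixingSubgroup G (f : Set α)) (hg : g ∈ 𝓕) :
    σ ∈ fixingSubgroup G (g : Set α) := by
  suffices g ∈ 𝓕 ∧ σ ∈ fixingSubgroup G (g : Set α) from this.2
  have hchain := h𝓕.reflTransGen hf hg
  clear hg
  induction hchain with
  | refl => exact ⟨hf, hfix⟩
  | tail _ hbc ih =>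
    obtain ⟨hb, hfixb⟩ := ih
    exact ⟨hbc.1, h𝓕.mem_fixingSubgroup_of_adjacent hσ hb hbc.1 hbc.2 hfixb⟩

theorem stabilizer_inf_fixingSubgroup_eq_bot [FaithfulSMul G α] (h𝓕 : IsPseudomanifold 𝓕 n)
    (hf : f ∈ 𝓕) : stabilizer G 𝓕 ⊓ fixingSubgroup G (f : Set α) = ⊥ := by
  refine (Subgroup.eq_bot_iff_forall _).2 fun σ ⟨hσ, hfix⟩ => ?_
  refine FaithfulSMul.eq_of_smul_eq_smul (α := α) fun v => ?_
  obtain ⟨g, hg, hv⟩ := h𝓕.exists_mem v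
  rw [one_smul]
  exact (mem_fixingSubgroup_iff G).1 (h𝓕.mem_fixingSubgroup_of_mem hσ hf hfix hg) v hv

lemma toPerm_facet_injective [FaithfulSMul G α] (h𝓕 : IsPseudomanifold 𝓕 n) (hf : f ∈ 𝓕) :
    Injective (toPerm : stabilizer (stabilizer G 𝓕) (f : Set α) → Equiv.Perm (f : Set α)) := by
  refine (injective_iff_map_eq_one (toPermHom _ _)).2 fun σ hσ => ?_
  have hfix : (σ : G) ∈ fixingSubgroup G (f : Set α) :=
    (mem_fixingSubgroup_iff G).2 fun v hv => congrArg Subtype.val (Equiv.congr_fun hσ ⟨v, hv⟩)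
  have hbot : (σ : G) ∈ stabilizer G 𝓕 ⊓ fixingSubgroup G (f : Set α) := ⟨σ.1.2, hfix⟩
  rw [h𝓕.stabilizer_inf_fixingSubgroup_eq_bot hf, Subgroup.mem_bot] at hbot
  exact Subtype.ext (Subtype.ext hbot)

theorem card_stabilizer_le [FaithfulSMul G α] (h𝓕 : IsPseudomanifold 𝓕 n) (hne : 𝓕.Nonempty) :
    Nat.card (stabilizer G 𝓕) ≤ #𝓕 * n ! := by
  obtain ⟨f, hf⟩ := hne
  have horbit : (orbit (stabilizer G 𝓕) f).ncard ≤ #𝓕 := by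
    rw [← Set.ncard_coe_finset 𝓕]
    refine Set.ncard_le_ncard ?_ 𝓕.finite_toSet
    rintro _ ⟨σ, rfl⟩
    exact mem_stabilizer_finset'.1 σ.2 hf
  have hstab : Nat.card (stabilizer (stabilizer G 𝓕) f) ≤ n ! := by
    rw [← stabilizer_coe_finset f]
    refine (Nat.card_le_card_of_injective _ (h𝓕.toPerm_facet_injective hf)).trans_eq ?_
    rw [Nat.card_perm, Nat.card_coe_set_eq, Set.ncard_coe_finset, h𝓕.sized hf]
  rw [← Subgroup.index_mul_card (stabilizer (stabilizer G 𝓕) f), index_stabilizer]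
  exact Nat.mul_le_mul horbit hstab

end IsPseudomanifold

end Pseudomanifold

section IncidenceGraph

variable {α : Type*} {𝓕 : Finset (Finset α)} {n : ℕ}

/-- The vertex-face graph (Levi graph) of a set family `𝓕`: the points of `α` form one side, the
members of `𝓕` the other, and adjacency is membership. -/
def incidenceGraph (𝓕 : Finset (Finset α)) : SimpleGraph (α ⊕ {f // f ∈ 𝓕}) where
  Adj
    | .inl v, .inr f => v ∈ f.1
    | .inr f, .inl v => v ∈ f.1
    | _, _ => False
  symm := ⟨by rintro (v | f) (w | g) h <;> exact h⟩
  loopless := ⟨by rintro (v | f) h <;> exact h⟩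

namespace incidenceGraph

lemma adj_inl_inr {v : α} {f : {f // f ∈ 𝓕}} :
    (incidenceGraph 𝓕).Adj (.inl v) (.inr f) ↔ v ∈ f.1 :=
  Iff.rfl

lemma ncard_neighborSet_inl [DecidableEq α] (v : α) :
    ((incidenceGraph 𝓕).neighborSet (.inl v)).ncard = #{f ∈ 𝓕 | v ∈ f} := by
  have : (incidenceGraph 𝓕).neighborSet (.inl v) = Sum.inr '' {f | v ∈ f.1} := by
    ext (w | f) <;> simp [incidenceGraph]
  rw [this, Set.ncard_image_of_injective _ Sum.inr_injective,
    ← Set.ncard_image_of_injective _ Subtype.val_injective, ← Set.ncard_coe_finset]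
  congr 1
  ext f
  simp [and_comm]

lemma ncard_neighborSet_inr (f : {f // f ∈ 𝓕}) :
    ((incidenceGraph 𝓕).neighborSet (.inr f)).ncard = #f.1 := by
  have : (incidenceGraph 𝓕).neighborSet (.inr f) = Sum.inl '' (f.1 : Set α) := by
    ext (w | g) <;> simp [incidenceGraph]
  rw [this, Set.ncard_image_of_injective _ Sum.inl_injective, Set.ncard_coe_finset]

lemma mapsTo_range_inl [DecidableEq α] (hsized : (𝓕 : Set (Finset α)).Sized n)
    (hdeg : ∀ v, #{f ∈ 𝓕 | v ∈ f} ≠ n) (e : incidenceGraph 𝓕 ≃g incidenceGraph 𝓕) :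
    Set.MapsTo e (Set.range Sum.inl) (Set.range Sum.inl) := by
  rintro _ ⟨v, rfl⟩
  have hcard : ((incidenceGraph 𝓕).neighborSet (.inl v)).ncard =
      ((incidenceGraph 𝓕).neighborSet (e (.inl v))).ncard :=
    Nat.card_congr (e.mapNeighborSet (.inl v))
  rcases hev : e (.inl v) with w | f
  · exact ⟨w, rfl⟩
  · rw [hev, ncard_neighborSet_inl, ncard_neighborSet_inr, hsized f.2] at hcard
    exact absurd hcard (hdeg v)

lemma coe_eq_smul_of_sumCongr [DecidableEq α] {e : incidenceGraph 𝓕 ≃g incidenceGraph 𝓕}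
    {τ : Equiv.Perm α} {ρ : Equiv.Perm {f // f ∈ 𝓕}} (he : Equiv.sumCongr τ ρ = e.toEquiv)
    (f : {f // f ∈ 𝓕}) : (ρ f : Finset α) = τ • f.1 := by
  have hinl (v : α) : e (.inl v) = .inl (τ v) := (Equiv.congr_fun he (.inl v)).symm
  have hinr : e (.inr f) = .inr (ρ f) := (Equiv.congr_fun he (.inr f)).symm
  ext w
  obtain ⟨v, rfl⟩ := τ.surjective w
  rw [← adj_inl_inr, ← hinl, ← hinr, e.map_adj_iff, adj_inl_inr, ← Equiv.Perm.smul_def,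
    smul_mem_smul_finset_iff]

theorem card_iso_le_card_stabilizer [Finite α] [DecidableEq α]
    (hsized : (𝓕 : Set (Finset α)).Sized n) (hdeg : ∀ v, #{f ∈ 𝓕 | v ∈ f} ≠ n) :
    Nat.card (incidenceGraph 𝓕 ≃g incidenceGraph 𝓕) ≤
      Nat.card (stabilizer (Equiv.Perm α) 𝓕) := by
  have hsplit (e : incidenceGraph 𝓕 ≃g incidenceGraph 𝓕) :
      ∃ τρ : Equiv.Perm α × Equiv.Perm {f // f ∈ 𝓕}, Equiv.sumCongr τρ.1 τρ.2 = e.toEquiv :=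
    Equiv.Perm.mem_sumCongrHom_range_of_perm_mapsTo_inl (mapsTo_range_inl hsized hdeg e)
  choose τρ hτρ using hsplit
  have hsmul (e) (f : {f // f ∈ 𝓕}) : ((τρ e).2 f : Finset α) = (τρ e).1 • f.1 :=
    coe_eq_smul_of_sumCongr (hτρ e) f
  have hmem (e) : (τρ e).1 ∈ stabilizer (Equiv.Perm α) 𝓕 :=
    mem_stabilizer_finset'.2 fun f hf => hsmul e ⟨f, hf⟩ ▸ ((τρ e).2 ⟨f, hf⟩).2
  refine Nat.card_le_card_of_injective (fun e => ⟨(τρ e).1, hmem e⟩) fun e₁ e₂ h => ?_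
  have hτ : (τρ e₁).1 = (τρ e₂).1 := congrArg Subtype.val h
  have hρ : (τρ e₁).2 = (τρ e₂).2 :=
    Equiv.ext fun f => Subtype.ext (by rw [hsmul, hsmul, hτ])
  refine RelIso.toEquiv_injective ?_
  rw [← hτρ e₁, ← hτρ e₂, hτ, hρ]

end incidenceGraph

end IncidenceGraph

lemma sized_faces : (faces : Set (Finset (Fin 6))).Sized 3 := by
  have : ∀ f ∈ faces, #f = 3 := by decide
  exact fun f hf => this f hf

lemma card_filter_mem_faces : ∀ v : Fin 6, #{f ∈ faces | v ∈ f} = 5 := by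
  decide

lemma card_filter_subset_faces_le_two :
    ∀ e : Finset (Fin 6), #e + 1 = 3 → #{f ∈ faces | e ⊆ f} ≤ 2 := by
  decide +kernel

-- The dual graph is the Petersen graph, of diameter two.
lemma faces_adjacent_or_exists_adjacent : ∀ f ∈ faces, ∀ g ∈ faces,
    f = g ∨ ∃ h ∈ faces, #(f ∩ h) = 2 ∧ (h = g ∨ #(h ∩ g) = 2) := by
  decide +kernel

theorem isPseudomanifold_faces : IsPseudomanifold faces 3 where
  sized := sized_faces
  card_ridge_le_two := card_filter_subset_faces_le_two
  reflTransGen f hf g hg := by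
    obtain rfl | ⟨h, hh, hfh, rfl | hhg⟩ := faces_adjacent_or_exists_adjacent f hf g hg
    · exact .refl
    · exact .single ⟨hg, by rw [hfh]⟩
    · exact .tail (.single ⟨hh, by rw [hfh]⟩) ⟨hg, by rw [hhg]⟩
  exists_mem := by decide

lemma piI_eq_incidenceGraph : piI = incidenceGraph faces := by
  ext (v | f) (w | g) <;> simp [piI, piRel, incidenceGraph]

/-- The automorphism group of `Π_I` has at most 60 elements. -/
theorem stmt_6 : Nat.card (piI ≃g piI) ≤ 60 := by
  rw [piI_eq_incidenceGraph]
  calc Nat.card (incidenceGraph faces ≃g incidenceGraph faces)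
      ≤ Nat.card (stabilizer (Equiv.Perm (Fin 6)) faces) :=
        incidenceGraph.card_iso_le_card_stabilizer sized_faces fun v => by
          simp [card_filter_mem_faces v]
    _ ≤ #faces * 3 ! := isPseudomanifold_faces.card_stabilizer_le ⟨{0, 1, 2}, by decide⟩
    _ = 60 := by decide
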